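/- Invertibility and uniform boundedness of the inverse of the compact operator B: For every periodic grid function w on ZMod N with mesh size h > 0, there exists a unique periodic grid function v with B v = w, where B v = v + (h²/6) δ² v; moreover ‖v‖ ≤ 3 ‖w‖ in the discrete L² norm. That is, B is bijective on the space of periodic grid functions and ‖B⁻¹ w‖ ≤ 3‖w‖ for all w. -/

import Mathlib

/-- Second-order central difference operator on periodic grid functions. -/
noncomputable def delta2 (N : ℕ) (h : ℝ) (v : ZMod N → ℝ) : ZMod N → ℝ :=
  fun i => (v (i + 1) - 2 * v i + v (i - 1)) / h ^ 2

/-- Fourth-order compact operator `B = I + (h²/6) δ²`. -/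
noncomputable def Bop (N : ℕ) (h : ℝ) (v : ZMod N → ℝ) : ZMod N → ℝ :=
  fun i => v i + h ^ 2 / 6 * delta2 N h v i

/-- Discrete L² inner product `(v, w) = h ∑ᵢ vᵢ wᵢ`. -/
noncomputable def ip (N : ℕ) [NeZero N] (h : ℝ) (v w : ZMod N → ℝ) : ℝ :=
  h * ∑ i, v i * w i

/-- Discrete L² norm `‖v‖ = √(v, v)`. -/
noncomputable def nrm (N : ℕ) [NeZero N] (h : ℝ) (v : ZMod N → ℝ) : ℝ :=
  Real.sqrt (ip N h v v)

/-!
Summation by parts on the periodic grid turns `(δ² v, v)` into minus the sum of the squared forward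
differences divided by `h²`, and that sum is at most `4 ‖v‖²`. Hence
`(B v, v) ≥ ‖v‖² - (4 / 6) ‖v‖² = ‖v‖² / 3`, and Cauchy–Schwarz gives `‖v‖ ≤ 3 ‖B v‖`. In particular
`B` is injective, hence bijective because the space of grid functions is finite-dimensional.
-/

section PeriodicSums

variable {G R : Type*} [AddCommGroup G] [Fintype G]

theorem sum_second_difference_mul [Ring R] (a : G) (f g : G → R) :
    ∑ i, (f (i + a) - 2 * f i + f (i - a)) * g i = -∑ i, fwdDiff a f i * fwdDiff a g i := by
  have shift : ∑ i, fwdDiff a f (i - a) * g i = ∑ i, fwdDiff a f i * g (i + a) := by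
    simpa using (Equiv.sum_comp (Equiv.addRight a) fun i => fwdDiff a f (i - a) * g i).symm
  calc ∑ i, (f (i + a) - 2 * f i + f (i - a)) * g i
      = ∑ i, fwdDiff a f i * g i - ∑ i, fwdDiff a f (i - a) * g i := by
        rw [← Finset.sum_sub_distrib]
        refine Finset.sum_congr rfl fun i _ => ?_
        simp only [fwdDiff, sub_add_cancel]
        noncomm_ring
    _ = -∑ i, fwdDiff a f i * fwdDiff a g i := by
        rw [shift, ← neg_sub, ← Finset.sum_sub_distrib]
        simp only [fwdDiff, mul_sub]

theorem sum_fwdDiff_sq_le [CommRing R] [LinearOrder R] [IsStrictOrderedRing R]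
    (a : G) (f : G → R) : ∑ i, fwdDiff a f i ^ 2 ≤ 4 * ∑ i, f i ^ 2 := by
  have shift : ∑ i, f (i + a) ^ 2 = ∑ i, f i ^ 2 :=
    Equiv.sum_comp (Equiv.addRight a) fun i => f i ^ 2
  calc ∑ i, fwdDiff a f i ^ 2
      ≤ ∑ i, 2 * (f (i + a) ^ 2 + f i ^ 2) :=
        Finset.sum_le_sum fun i _ => by
          simpa [fwdDiff, sub_eq_add_neg] using add_sq_le (a := f (i + a)) (b := -f i)
    _ = 4 * ∑ i, f i ^ 2 := by
        rw [← Finset.mul_sum, Finset.sum_add_distrib, shift]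
        ring

end PeriodicSums

section DiscreteL2

variable {N : ℕ} [NeZero N] {h : ℝ}

theorem ip_self (v : ZMod N → ℝ) : ip N h v v = h * ∑ i, v i ^ 2 := by
  simp only [ip, sq]

theorem nrm_nonneg (v : ZMod N → ℝ) : 0 ≤ nrm N h v :=
  Real.sqrt_nonneg _

theorem nrm_sq (hh : 0 ≤ h) (v : ZMod N → ℝ) : nrm N h v ^ 2 = ip N h v v :=
  Real.sq_sqrt <| by rw [ip_self]; positivity

theorem nrm_eq_zero (hh : 0 < h) {v : ZMod N → ℝ} : nrm N h v = 0 ↔ v = 0 := by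
  rw [← sq_eq_zero_iff, nrm_sq hh.le, ip_self, mul_eq_zero_iff_left hh.ne',
    Finset.sum_eq_zero_iff_of_nonneg fun i _ => sq_nonneg (v i)]
  simp [funext_iff]

theorem ip_le_nrm_mul_nrm (hh : 0 ≤ h) (v w : ZMod N → ℝ) :
    ip N h v w ≤ nrm N h v * nrm N h w := by
  calc ip N h v w
      ≤ h * (√(∑ i, v i ^ 2) * √(∑ i, w i ^ 2)) :=
        mul_le_mul_of_nonneg_left (Real.sum_mul_le_sqrt_mul_sqrt _ v w) hh
    _ = nrm N h v * nrm N h w := by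
        rw [nrm, nrm, ip_self, ip_self, Real.sqrt_mul hh, Real.sqrt_mul hh, mul_mul_mul_comm,
          Real.mul_self_sqrt hh]

theorem ip_fwdDiff_self_le (hh : 0 ≤ h) (a : ZMod N) (v : ZMod N → ℝ) :
    ip N h (fwdDiff a v) (fwdDiff a v) ≤ 4 * ip N h v v := by
  rw [ip_self, ip_self, mul_left_comm]
  exact mul_le_mul_of_nonneg_left (sum_fwdDiff_sq_le a v) hh

end DiscreteL2

theorem isLinearMap_Bop (N : ℕ) (h : ℝ) : IsLinearMap ℝ (Bop N h) where
  map_add v w := by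
    funext i
    simp only [Bop, delta2, Pi.add_apply]
    ring
  map_smul c v := by
    funext i
    simp only [Bop, delta2, Pi.smul_apply, smul_eq_mul]
    ring

theorem Bop_apply {N : ℕ} {h : ℝ} (hh : h ≠ 0) (v : ZMod N → ℝ) (i : ZMod N) :
    Bop N h v i = v i + (v (i + 1) - 2 * v i + v (i - 1)) / 6 := by
  simp only [Bop, delta2]
  field_simp

section Bop

variable {N : ℕ} [NeZero N] {h : ℝ}

theorem ip_Bop (hh : h ≠ 0) (v w : ZMod N → ℝ) :
    ip N h (Bop N h v) w = ip N h v w - ip N h (fwdDiff 1 v) (fwdDiff 1 w) / 6 := by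
  simp only [ip, Bop_apply hh, add_mul, div_mul_eq_mul_div, Finset.sum_add_distrib,
    ← Finset.sum_div]
  simp only [← add_mul, ← Finset.sum_add_distrib, sum_second_difference_mul]
  ring

theorem nrm_sq_le_three_mul_ip_Bop (hh : 0 < h) (v : ZMod N → ℝ) :
    nrm N h v ^ 2 ≤ 3 * ip N h (Bop N h v) v := by
  rw [nrm_sq hh.le, ip_Bop hh.ne']
  linarith [ip_fwdDiff_self_le hh.le 1 v]

theorem nrm_le_three_mul_nrm_Bop (hh : 0 < h) (v : ZMod N → ℝ) :
    nrm N h v ≤ 3 * nrm N h (Bop N h v) := by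
  have key : nrm N h v * nrm N h v ≤ 3 * nrm N h (Bop N h v) * nrm N h v := by
    linarith [nrm_sq_le_three_mul_ip_Bop hh v, ip_le_nrm_mul_nrm hh.le (Bop N h v) v]
  rcases (nrm_nonneg v).eq_or_lt' with hv | hv
  · rw [hv]
    exact mul_nonneg zero_le_three (nrm_nonneg _)
  · exact le_of_mul_le_mul_right key hv

theorem Bop_bijective (hh : 0 < h) : Function.Bijective (Bop N h) := by
  let B := (isLinearMap_Bop N h).mk'
  have injective : Function.Injective B := by
    refine (injective_iff_map_eq_zero B).2 fun v hv => (nrm_eq_zero hh).1 ?_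
    have hBv : nrm N h (Bop N h v) = 0 := (nrm_eq_zero hh).2 hv
    refine le_antisymm ?_ (nrm_nonneg v)
    simpa only [hBv, mul_zero] using nrm_le_three_mul_nrm_Bop hh v
  exact ⟨injective, LinearMap.injective_iff_surjective.1 injective⟩

end Bop

/-- Invertibility and uniform boundedness of the inverse of the compact
operator `B`: for every `w` there is a unique `v` with `B v = w`, and any
such `v` satisfies `‖v‖ ≤ 3‖w‖`, i.e. `‖B⁻¹‖ ≤ 3`. -/
theorem Bop_bijective_inverse_bounded
    (N : ℕ) [NeZero N] (h : ℝ) (hh : 0 < h) (w : ZMod N → ℝ) :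
    (∃! v : ZMod N → ℝ, Bop N h v = w)
      ∧ ∀ v : ZMod N → ℝ, Bop N h v = w → nrm N h v ≤ 3 * nrm N h w := by
  refine ⟨(Bop_bijective hh).existsUnique w, ?_⟩
  rintro v rfl
  exact nrm_le_three_mul_nrm_Bop hh v
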